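/- Let W be an infinite word such that there is a constant C with factor complexity P(N) ≤ C·N for all N ≥ 1. Then the first difference P(N+1) − P(N) is bounded: there exists D such that P(N+1) − P(N) ≤ D for all N. -/

import Mathlib

/-- The factor (subword) of the infinite word `W` of length `n` starting at position `i`. -/
def factorAt {A : Type*} (W : ℕ → A) (i n : ℕ) : List A :=
  (List.range n).map (fun j => W (i + j))

/-- `u` is a finite factor of the infinite word `W`. -/
def IsFactorOf {A : Type*} (u : List A) (W : ℕ → A) : Prop :=
  ∃ i, u = factorAt W i u.length

/-!
A factor of length `n + 1` is determined by its prefix of length `n`, except above right special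
prefixes. Above such a prefix at most one extension has a suffix of length `m + 1` with a period
that is small compared to `m`, so `P (n + 1) - P n` is at most the number of extensions whose
suffix `v a` (`a` a letter) has no small period. Two nearby occurrences of such extensions cannot
have the same `v`, since `v` overlapping itself would create a small period; as `v` is right
special, a window of `W` contains at most `R m` occurrences, where `R m` counts the right special
factors of length `m`. Every extension is seen at many offsets in windows of length proportional to
`n`, and there are only linearly many such windows, so the number of extensions is at most a
constant times `R m`. Since `P m + R m ≤ P (m + 1)`, linear complexity makes `R m` bounded
for some `m` in every interval `[l, 2 * l)`, so `m` can be chosen proportional to `n`.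
-/

section Counting

variable {α β : Type*}

lemma ncard_le_mul_ncard_of_mapsTo {s : Set α} {t : Set β} {f : α → β} {r : ℕ} (hs : s.Finite)
    (ht : t.Finite) (hf : Set.MapsTo f s t) (hr : ∀ b ∈ t, {a ∈ s | f a = b}.ncard ≤ r) :
    s.ncard ≤ r * t.ncard := by
  classical
  lift s to Finset α using hs
  lift t to Finset β using ht
  simp only [Set.ncard_coe_finset]
  refine Finset.card_le_mul_card_image_of_maps_to hf r fun b hb => ?_
  rw [← Set.ncard_coe_finset, Finset.coe_filter]
  exact hr b hb

end Counting

section Period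

variable {α : Type*}

lemma eq_of_hasPeriod_concat {v : List α} {a b : α} {d e : ℕ} (hd : 0 < d) (he : 0 < e)
    (hde : d + e ≤ v.length) (ha : (v ++ [a]).HasPeriod d) (hb : (v ++ [b]).HasPeriod e) :
    a = b := by
  rw [List.hasPeriod_iff_getElem?] at ha hb
  simp only [List.length_append, List.length_singleton] at ha hb
  have shift {i p : ℕ} {c : α} (hp : i + p < v.length)
      (hc : ∀ j < v.length + 1 - p, (v ++ [c])[j]? = (v ++ [c])[j + p]?) : v[i]? = v[i + p]? := by
    simpa [List.getElem?_append_left, hp, (Nat.le_add_right i p).trans_lt hp] using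
      hc i (by omega)
  have last {p : ℕ} {c : α} (hp : 0 < p) (hpv : p ≤ v.length)
      (hc : ∀ j < v.length + 1 - p, (v ++ [c])[j]? = (v ++ [c])[j + p]?) :
      v[v.length - p]? = some c := by
    have h := hc (v.length - p) (by omega)
    rwa [Nat.sub_add_cancel hpv, List.getElem?_append_left (by omega),
      List.getElem?_concat_length] at h
  obtain ⟨q, hq⟩ := Nat.exists_eq_add_of_le' hde
  refine Option.some_injective _ ?_
  calc some a = v[v.length - d]? := (last hd (by omega) ha).symm
    _ = v[q + e]? := by congr 1; omega
    _ = v[q]? := (shift (by omega) hb).symm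
    _ = v[q + d]? := shift (by omega) ha
    _ = v[v.length - e]? := by congr 1; omega
    _ = some b := last he (by omega) hb

end Period

section Factors

variable {A : Type*} {W : ℕ → A}

@[simp]
lemma length_factorAt (W : ℕ → A) (i n : ℕ) : (factorAt W i n).length = n := by
  simp [factorAt]

lemma factorAt_add (W : ℕ → A) (i m n : ℕ) :
    factorAt W i (m + n) = factorAt W i m ++ factorAt W (i + m) n := by
  simp [factorAt, List.range_add, Function.comp_def, add_assoc]

lemma factorAt_succ (W : ℕ → A) (i n : ℕ) :
    factorAt W i (n + 1) = factorAt W i n ++ [W (i + n)] := by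
  simp [factorAt, List.range_succ]

lemma take_factorAt (W : ℕ → A) (i m n : ℕ) :
    (factorAt W i (m + n)).take m = factorAt W i m := by
  rw [factorAt_add, List.take_left' (length_factorAt W i m)]

lemma drop_factorAt (W : ℕ → A) (i m n : ℕ) :
    (factorAt W i (m + n)).drop m = factorAt W (i + m) n := by
  rw [factorAt_add, List.drop_left' (length_factorAt W i m)]

lemma dropLast_factorAt_succ (W : ℕ → A) (i n : ℕ) :
    (factorAt W i (n + 1)).dropLast = factorAt W i n := by
  rw [factorAt_succ, List.dropLast_concat]

lemma factorAt_add_eq_of_factorAt_eq {i j l s n : ℕ} (h : factorAt W i l = factorAt W j l)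
    (hs : s + n ≤ l) : factorAt W (i + s) n = factorAt W (j + s) n := by
  obtain ⟨t, rfl⟩ := Nat.exists_eq_add_of_le hs
  rw [add_assoc] at h
  simpa only [drop_factorAt, take_factorAt] using congrArg (fun u => (u.drop s).take n) h

lemma hasPeriod_factorAt_of_eq {i d m : ℕ} (h : factorAt W i m = factorAt W (i + d) m) :
    (factorAt W i (d + m)).HasPeriod d := by
  rw [List.HasPeriod, take_factorAt]
  nth_rw 1 [factorAt_add]
  rw [← h, List.prefix_append_right_inj, add_comm d m, factorAt_add W i m d]
  exact List.prefix_append _ _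

lemma isFactorOf_factorAt (W : ℕ → A) (i n : ℕ) : IsFactorOf (factorAt W i n) W :=
  ⟨i, by rw [length_factorAt]⟩

lemma IsFactorOf.of_suffix {u v : List A} (hv : IsFactorOf v W) (h : u <:+ v) :
    IsFactorOf u W := by
  obtain ⟨s, rfl⟩ := h
  obtain ⟨i, hi⟩ := hv
  rw [List.length_append, factorAt_add] at hi
  exact ⟨i + s.length, (List.append_inj hi (length_factorAt W i s.length).symm).2⟩

/-- The language of `W` in length `n`: the factors of `W` of length `n`. -/
def factors (W : ℕ → A) (n : ℕ) : Set (List A) :=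
  {u | IsFactorOf u W ∧ u.length = n}

/-- The factor complexity `P n` of `W`; as a cardinality in `ℕ` it is meaningful only when `W` has
finitely many factors of length `n`, and is `0` otherwise. -/
noncomputable def complexity (W : ℕ → A) (n : ℕ) : ℕ :=
  (factors W n).ncard

lemma factorAt_mem_factors (W : ℕ → A) (i n : ℕ) : factorAt W i n ∈ factors W n :=
  ⟨isFactorOf_factorAt W i n, length_factorAt W i n⟩

lemma exists_factorAt_eq {n : ℕ} {u : List A} (hu : u ∈ factors W n) :
    ∃ i, factorAt W i n = u := by
  obtain ⟨⟨i, hi⟩, rfl⟩ := hu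
  exact ⟨i, hi.symm⟩

lemma finite_factors (hW : (Set.range W).Finite) (n : ℕ) : (factors W n).Finite := by
  have := hW.to_subtype
  refine ((List.finite_length_eq (Set.range W) n).image (List.map Subtype.val)).subset ?_
  intro u hu
  obtain ⟨i, rfl⟩ := exists_factorAt_eq hu
  exact ⟨factorAt (Set.rangeFactorization W) i n, length_factorAt _ i n, by
    simp [factorAt, Function.comp_def]⟩

lemma dropLast_mem_factors {n : ℕ} {u : List A} (hu : u ∈ factors W (n + 1)) :
    u.dropLast ∈ factors W n := by
  obtain ⟨i, rfl⟩ := exists_factorAt_eq hu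
  rw [dropLast_factorAt_succ]
  exact factorAt_mem_factors W i n

lemma exists_concat_mem_factors {n : ℕ} {v : List A} (hv : v ∈ factors W n) :
    ∃ a, v ++ [a] ∈ factors W (n + 1) := by
  obtain ⟨i, rfl⟩ := exists_factorAt_eq hv
  exact ⟨W (i + n), factorAt_succ W i n ▸ factorAt_mem_factors W i (n + 1)⟩

end Factors

section RightSpecial

variable {A : Type*} {W : ℕ → A}

/-- The right special factors of `W` of length `n`: those that extend to the right by at least two
different letters within `W`. -/
def rightSpecial (W : ℕ → A) (n : ℕ) : Set (List A) :=
  {v | v.length = n ∧ ∃ a b, a ≠ b ∧ IsFactorOf (v ++ [a]) W ∧ IsFactorOf (v ++ [b]) W}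

lemma drop_mem_rightSpecial {k m : ℕ} {v : List A} (hv : v ∈ rightSpecial W (k + m)) :
    v.drop k ∈ rightSpecial W m := by
  obtain ⟨hlen, a, b, hab, ha, hb⟩ := hv
  have hsuffix (c : A) : v.drop k ++ [c] <:+ v ++ [c] :=
    List.suffix_append_inj_of_length_eq rfl |>.2 ⟨List.drop_suffix k v, rfl⟩
  exact ⟨by simp [hlen], a, b, hab, ha.of_suffix (hsuffix a), hb.of_suffix (hsuffix b)⟩

lemma rightSpecial_subset_image_dropLast (n : ℕ) (c : List A → A) :
    rightSpecial W n ⊆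
      List.dropLast '' (factors W (n + 1) \ (fun v => v ++ [c v]) '' factors W n) := by
  rintro v ⟨hlen, a, b, hab, ha, hb⟩
  obtain ⟨e, he, hec⟩ : ∃ e, IsFactorOf (v ++ [e]) W ∧ e ≠ c v := by
    rcases eq_or_ne a (c v) with h | h
    · exact ⟨b, hb, fun h' => hab (h.trans h'.symm)⟩
    · exact ⟨a, ha, h⟩
  refine ⟨v ++ [e], ⟨⟨he, by simp [hlen]⟩, ?_⟩, List.dropLast_concat⟩
  rintro ⟨u, -, hu⟩
  obtain ⟨rfl, h⟩ := List.append_inj' hu rfl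
  exact hec (List.singleton_inj.1 h).symm

lemma finite_rightSpecial (hW : (Set.range W).Finite) (n : ℕ) : (rightSpecial W n).Finite :=
  (((finite_factors hW (n + 1)).sdiff).image _).subset
    (rightSpecial_subset_image_dropLast n fun _ => W 0)

lemma complexity_add_ncard_rightSpecial_le (hW : (Set.range W).Finite) (n : ℕ) :
    complexity W n + (rightSpecial W n).ncard ≤ complexity W (n + 1) := by
  have : Nonempty A := ⟨W 0⟩
  choose! c hc using fun v => exists_concat_mem_factors (W := W) (n := n) (v := v)
  set extend : List A → List A := fun v => v ++ [c v]
  have hfin := finite_factors hW (n + 1)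
  have hinj : Function.Injective extend := fun u v huv => (List.append_inj' huv rfl).1
  have hspecial : (rightSpecial W n).ncard ≤ (factors W (n + 1) \ extend '' factors W n).ncard :=
    (Set.ncard_le_ncard (rightSpecial_subset_image_dropLast n c) (hfin.sdiff.image _)).trans
      (Set.ncard_image_le hfin.sdiff)
  calc complexity W n + (rightSpecial W n).ncard
      ≤ (extend '' factors W n).ncard + (factors W (n + 1) \ extend '' factors W n).ncard := by
        rw [Set.ncard_image_of_injective _ hinj]
        exact Nat.add_le_add_left hspecial _
    _ = complexity W (n + 1) := by
        rw [add_comm]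
        exact Set.ncard_sdiff_add_ncard_of_subset (Set.image_subset_iff.2 hc) hfin

lemma sum_ncard_rightSpecial_le (hW : (Set.range W).Finite) {a b : ℕ} (hab : a ≤ b) :
    ∑ m ∈ Finset.Ico a b, (rightSpecial W m).ncard ≤ complexity W b := by
  induction b, hab using Nat.le_induction with
  | base => simp
  | succ b hab ih =>
    rw [Finset.sum_Ico_succ_top hab]
    exact (Nat.add_le_add_right ih _).trans (complexity_add_ncard_rightSpecial_le hW b)

lemma exists_ncard_rightSpecial_le (hW : (Set.range W).Finite) {n K : ℕ} (hn : 0 < n)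
    (h : complexity W (2 * n) ≤ n * K) :
    ∃ m, n ≤ m ∧ m < 2 * n ∧ (rightSpecial W m).ncard ≤ K := by
  have hsum : ∑ m ∈ Finset.Ico n (2 * n), (rightSpecial W m).ncard ≤
      ∑ _m ∈ Finset.Ico n (2 * n), K :=
    calc _ ≤ complexity W (2 * n) := sum_ncard_rightSpecial_le hW (by omega)
      _ ≤ n * K := h
      _ = _ := by simp [two_mul]
  obtain ⟨m, hm, hmK⟩ := Finset.exists_le_of_sum_le (Finset.nonempty_Ico.2 (by omega)) hsum
  obtain ⟨hnm, hm2⟩ := Finset.mem_Ico.1 hm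
  exact ⟨m, hnm, hm2, hmK⟩

end RightSpecial

section Occurrences

variable {A : Type*} {W : ℕ → A}

/-- The positions of `W` at which a word of length `n` belonging to `B` occurs. -/
def occurrences (W : ℕ → A) (n : ℕ) (B : Set (List A)) : Set ℕ :=
  {i | factorAt W i n ∈ B}

variable {n g r : ℕ} {B : Set (List A)} {p : List A → ℕ}

lemma ncard_setOf_lt_le_ncard_occurrences (hp : ∀ x ∈ B, factorAt W (p x) n = x) :
    {x ∈ B | p x < g}.ncard ≤ (occurrences W n B ∩ Set.Ico 0 g).ncard := by
  refine Set.ncard_le_ncard_of_injOn p ?_ ?_ ((Set.finite_Ico _ _).inter_of_right _)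
  · rintro x ⟨hx, hxg⟩
    exact ⟨by simpa only [occurrences, Set.mem_ofPred_eq, hp x hx], by simpa using hxg⟩
  · rintro x ⟨hx, -⟩ y ⟨hy, -⟩ hxy
    rw [← hp x hx, ← hp y hy, hxy]

lemma mul_ncard_setOf_le_le_of_sparse (hW : (Set.range W).Finite) (hB : B.Finite)
    (hp : ∀ x ∈ B, factorAt W (p x) n = x)
    (hsparse : ∀ a, (occurrences W n B ∩ Set.Ico a (a + g)).ncard ≤ r) :
    {x ∈ B | g ≤ p x}.ncard * g ≤ r * complexity W (g + n) := by
  set S := {x ∈ B | g ≤ p x} ×ˢ Set.Iio g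
  have hS : S.ncard = {x ∈ B | g ≤ p x}.ncard * g := by
    rw [Set.ncard_prod, ← Finset.coe_Iio, Set.ncard_coe_finset, Nat.card_Iio]
  rw [← hS]
  refine ncard_le_mul_ncard_of_mapsTo (f := fun z => factorAt W (p z.1 - z.2) (g + n))
    ((hB.sep _).prod (Set.finite_Iio g)) (finite_factors hW _)
    (fun z _ => factorAt_mem_factors W _ _) fun U hU => ?_
  obtain ⟨a, rfl⟩ := exists_factorAt_eq hU
  have hread (z : List A × ℕ) (hz : z ∈ S)
      (hza : factorAt W (p z.1 - z.2) (g + n) = factorAt W a (g + n)) :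
      factorAt W (a + z.2) n = z.1 := by
    obtain ⟨⟨hx, hxg⟩, hs : z.2 < g⟩ := hz
    rw [← factorAt_add_eq_of_factorAt_eq hza (by omega), Nat.sub_add_cancel (by omega), hp _ hx]
  refine le_trans (Set.ncard_le_ncard_of_injOn (fun z => a + z.2) ?_ ?_
    ((Set.finite_Ico _ _).inter_of_right _)) (hsparse a)
  · rintro z ⟨hz, hza⟩
    refine ⟨?_, by simpa using hz.2⟩
    rw [occurrences, Set.mem_ofPred_eq, hread z hz hza]
    exact hz.1.1
  · rintro y ⟨hy, hya⟩ z ⟨hz, hza⟩ (hyz : a + y.2 = a + z.2)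
    refine Prod.ext ?_ (Nat.add_left_cancel hyz)
    rw [← hread y hy hya, ← hread z hz hza, hyz]

lemma mul_ncard_le_of_sparse (hW : (Set.range W).Finite) (hB : B ⊆ factors W n)
    (hsparse : ∀ a, (occurrences W n B ∩ Set.Ico a (a + g)).ncard ≤ r) :
    g * B.ncard ≤ r * (g + complexity W (g + n)) := by
  have hfin := (finite_factors hW n).subset hB
  choose! p hp using fun x (hx : x ∈ B) => exists_factorAt_eq (hB hx)
  have hstart : {x ∈ B | p x < g}.ncard ≤ r :=
    (ncard_setOf_lt_le_ncard_occurrences hp).trans (by simpa only [zero_add] using hsparse 0)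
  -- The counted windows start up to `g` letters before `p x`, hence the case `p x < g` is separate.
  have hsplit : B.ncard ≤ {x ∈ B | p x < g}.ncard + {x ∈ B | g ≤ p x}.ncard :=
    (Set.ncard_le_ncard (fun x hx => (lt_or_ge (p x) g).imp (⟨hx, ·⟩) (⟨hx, ·⟩))
      ((hfin.sep _).union (hfin.sep _))).trans (Set.ncard_union_le _ _)
  calc g * B.ncard
      ≤ g * {x ∈ B | p x < g}.ncard + {x ∈ B | g ≤ p x}.ncard * g := by
        rw [mul_comm _ g, ← mul_add]
        exact Nat.mul_le_mul_left g hsplit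
    _ ≤ g * r + r * complexity W (g + n) :=
        Nat.add_le_add (Nat.mul_le_mul_left g hstart)
          (mul_ncard_setOf_le_le_of_sparse hW hfin hp hsparse)
    _ = r * (g + complexity W (g + n)) := by ring

end Occurrences

section AperiodicExtensions

variable {A : Type*} {W : ℕ → A}

/-- The one-letter extensions in `W` of right special factors of length `k + m` whose suffix of
length `m + 1` has no period `d` with `0 < d < g`. They account for the growth of the complexity
from `k + m` to `k + m + 1`. -/
def aperiodicExtensions (W : ℕ → A) (k m g : ℕ) : Set (List A) :=
  {x ∈ factors W (k + m + 1) | x.dropLast ∈ rightSpecial W (k + m) ∧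
    ∀ d, 0 < d → d < g → ¬ (x.drop k).HasPeriod d}

variable {k m g : ℕ}

lemma eq_of_concat_notMem_aperiodicExtensions (hg : 2 * g ≤ m) {v : List A} {a b : A}
    (ha : v ++ [a] ∈ factors W (k + m + 1) \ aperiodicExtensions W k m g)
    (hb : v ++ [b] ∈ factors W (k + m + 1) \ aperiodicExtensions W k m g) : a = b := by
  by_contra hab
  have hlen : v.length = k + m := by simpa using ha.1.2
  have hv : v ∈ rightSpecial W (k + m) := ⟨hlen, a, b, hab, ha.1.1, hb.1.1⟩
  have hperiod {c : A} (hc : v ++ [c] ∈ factors W (k + m + 1) \ aperiodicExtensions W k m g) :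
      ∃ d, 0 < d ∧ d < g ∧ (v.drop k ++ [c]).HasPeriod d := by
    by_contra! hno
    refine hc.2 ⟨hc.1, by rwa [List.dropLast_concat], ?_⟩
    rwa [List.drop_append_of_le_length (by omega)]
  obtain ⟨d, hd, hdg, hda⟩ := hperiod ha
  obtain ⟨e, he, heg, heb⟩ := hperiod hb
  have hde : d + e ≤ (v.drop k).length := by rw [List.length_drop]; omega
  exact hab (eq_of_hasPeriod_concat hd he hde hda heb)

lemma injOn_dropLast_sdiff_aperiodicExtensions (hg : 2 * g ≤ m) :
    Set.InjOn List.dropLast (factors W (k + m + 1) \ aperiodicExtensions W k m g) := by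
  intro x hx y hy hxy
  obtain ⟨i, rfl⟩ := exists_factorAt_eq hx.1
  obtain ⟨j, rfl⟩ := exists_factorAt_eq hy.1
  rw [dropLast_factorAt_succ, dropLast_factorAt_succ] at hxy
  rw [factorAt_succ] at hx ⊢
  rw [factorAt_succ, ← hxy] at hy ⊢
  rw [eq_of_concat_notMem_aperiodicExtensions hg hx hy]

lemma complexity_succ_le_add_ncard_aperiodicExtensions (hW : (Set.range W).Finite)
    (hg : 2 * g ≤ m) :
    complexity W (k + m + 1) ≤ complexity W (k + m) + (aperiodicExtensions W k m g).ncard := by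
  have hfin := finite_factors hW (k + m + 1)
  refine (Set.ncard_le_ncard_sdiff_add_ncard _ _ (hfin.sep _)).trans (Nat.add_le_add_right ?_ _)
  exact Set.ncard_le_ncard_of_injOn List.dropLast (fun x hx => dropLast_mem_factors hx.1)
    (injOn_dropLast_sdiff_aperiodicExtensions hg) (finite_factors hW _)

lemma factorAt_ne_of_mem_occurrences_aperiodicExtensions {i j : ℕ} (hij : i < j) (hjg : j < i + g)
    (hi : i ∈ occurrences W (k + m + 1) (aperiodicExtensions W k m g)) :
    factorAt W (i + k) m ≠ factorAt W (j + k) m := by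
  obtain ⟨d, rfl⟩ := Nat.exists_eq_add_of_lt hij
  intro heq
  have hperiod : (factorAt W (i + k) (d + 1 + m)).HasPeriod (d + 1) :=
    hasPeriod_factorAt_of_eq (by rw [heq]; congr 1; omega)
  refine hi.2.2 (d + 1) (by omega) (by omega) (hperiod.infix ?_)
  rw [add_assoc k, drop_factorAt, show d + 1 + m = m + 1 + d by omega, factorAt_add W _ (m + 1)]
  exact (List.prefix_append _ _).isInfix

lemma ncard_occurrences_aperiodicExtensions_inter_Ico_le (hW : (Set.range W).Finite) (a : ℕ) :
    (occurrences W (k + m + 1) (aperiodicExtensions W k m g) ∩ Set.Ico a (a + g)).ncard ≤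
      (rightSpecial W m).ncard := by
  refine Set.ncard_le_ncard_of_injOn (fun i => factorAt W (i + k) m) ?_ ?_
    (finite_rightSpecial hW m)
  · rintro i ⟨hi, -⟩
    have h := drop_mem_rightSpecial hi.2.1
    rwa [dropLast_factorAt_succ, drop_factorAt] at h
  · rintro i ⟨hi, hia, hig⟩ j ⟨hj, hja, hjg⟩ hij
    by_contra hne
    rcases Nat.lt_or_gt_of_ne hne with h | h
    · exact factorAt_ne_of_mem_occurrences_aperiodicExtensions h (by omega) hi hij
    · exact factorAt_ne_of_mem_occurrences_aperiodicExtensions h (by omega) hj hij.symm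

theorem mul_complexity_succ_le (hW : (Set.range W).Finite) (hg : 2 * g ≤ m) :
    g * complexity W (k + m + 1) ≤ g * complexity W (k + m) +
      (rightSpecial W m).ncard * (g + complexity W (g + (k + m + 1))) :=
  calc g * complexity W (k + m + 1)
      ≤ g * complexity W (k + m) + g * (aperiodicExtensions W k m g).ncard := by
        rw [← mul_add]
        exact Nat.mul_le_mul_left g (complexity_succ_le_add_ncard_aperiodicExtensions hW hg)
    _ ≤ _ := Nat.add_le_add_left (mul_ncard_le_of_sparse hW (Set.sep_subset _ _)
        (ncard_occurrences_aperiodicExtensions_inter_Ico_le hW)) _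

end AperiodicExtensions

theorem stmt9_general {A : Type*} {W : ℕ → A} (hW : (Set.range W).Finite) {C : ℕ}
    (h : ∀ N ≥ 1, complexity W N ≤ C * N) (N : ℕ) :
    complexity W (N + 1) ≤ complexity W N + 2 * C * (9 * C + 1) := by
  rcases Nat.lt_or_ge N 4 with hN | hN
  · have hsmall : C * (N + 1) ≤ C * 4 := Nat.mul_le_mul_left C hN
    nlinarith [h (N + 1) (by omega), Nat.le_mul_self C]
  obtain ⟨g, hg, hgN, hNg⟩ : ∃ g, 1 ≤ g ∧ 4 * g ≤ N ∧ N < 4 * g + 4 :=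
    ⟨N / 4, by omega, by omega, by omega⟩
  obtain ⟨m, hgm, hmg, hm⟩ : ∃ m, 2 * g ≤ m ∧ m < 2 * (2 * g) ∧ (rightSpecial W m).ncard ≤ 2 * C :=
    exists_ncard_rightSpecial_le hW (by omega) ((h _ (by omega)).trans_eq (by ring))
  obtain ⟨k, rfl⟩ := Nat.exists_eq_add_of_le' (show m ≤ N by omega)
  have hwindow : complexity W (g + (k + m + 1)) ≤ C * (9 * g) :=
    (h _ (by omega)).trans (Nat.mul_le_mul_left C (by omega))
  refine Nat.le_of_mul_le_mul_left ?_ (show 0 < g by omega)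
  calc g * complexity W (k + m + 1)
      ≤ g * complexity W (k + m) +
          (rightSpecial W m).ncard * (g + complexity W (g + (k + m + 1))) :=
        mul_complexity_succ_le hW hgm
    _ ≤ g * complexity W (k + m) + 2 * C * (g + C * (9 * g)) := by gcongr
    _ = g * (complexity W (k + m) + 2 * C * (9 * C + 1)) := by ring

/-- Cassaigne: linear complexity implies bounded first differences of complexity. -/
theorem stmt9 {A : Type*} [Fintype A] (W : ℕ → A) (C : ℕ)
    (h : ∀ N ≥ 1, Set.ncard {u : List A | IsFactorOf u W ∧ u.length = N} ≤ C * N) :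
    ∃ D : ℕ, ∀ N : ℕ,
      Set.ncard {u : List A | IsFactorOf u W ∧ u.length = N + 1} ≤
      Set.ncard {u : List A | IsFactorOf u W ∧ u.length = N} + D :=
  ⟨2 * C * (9 * C + 1), stmt9_general (Set.toFinite _) h⟩
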